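/- Fix integers d,e ≥ 1 and n ≥ 0, and consider the equivalence relation on T_n given by t ~ t' iff ld(t) ~^d ld(t') and rd(t) ~^e rd(t'). The cardinality of every equivalence class is a product of Catalan numbers C_{m_0−1}·C_{m_1−1}⋯C_{m_r−1} for some r ≥ 0 and positive integers m_0,…,m_r with m_0 + m_1 + ⋯ + m_r = n+1. -/

import Mathlib

/-- Full binary trees (every internal node has exactly two children). -/
inductive BTree : Type
  | leaf : BTree
  | node : BTree → BTree → BTree
deriving DecidableEq

namespace BTree

/-- Number of leaves of a full binary tree. -/
def numLeaves : BTree → ℕ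
  | leaf => 1
  | node l r => l.numLeaves + r.numLeaves

/-- The list of pairs (left depth, right depth) of the leaves, in preorder. -/
def leafDepths : BTree → List (ℕ × ℕ)
  | leaf => [(0, 0)]
  | node l r =>
      (l.leafDepths.map fun p => (p.1 + 1, p.2)) ++ (r.leafDepths.map fun p => (p.1, p.2 + 1))

/-- The left depth sequence `ld(t)` of the leaves of `t`, in preorder. -/
def ld (t : BTree) : List ℕ := t.leafDepths.map Prod.fst

/-- The right depth sequence `rd(t)` of the leaves of `t`, in preorder. -/
def rd (t : BTree) : List ℕ := t.leafDepths.map Prod.snd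

end BTree

/-- `b ~^d c` : the sequences have equal length and agree at every position where
either entry is `< d`. -/
def DepthEq (d : ℕ) : List ℕ → List ℕ → Prop :=
  List.Forall₂ (fun a b => min a b < d → a = b)

/-- `b ~_k c` : entrywise congruence mod `k` (and equal length). -/
def ModListEq (k : ℕ) : List ℕ → List ℕ → Prop :=
  List.Forall₂ (fun a b => a % k = b % k)

/-- The relation `t ~ t'` iff `ld(t) ~^d ld(t')` and `rd(t) ~^e rd(t')`. -/
def DeRel (d e : ℕ) (t t' : BTree) : Prop :=
  DepthEq d t.ld t'.ld ∧ DepthEq e t.rd t'.rd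

/-- The relation `t ~ t'` iff `ld(t) ~_k^d ld(t')` (i.e. `ld(t) ~_k ld(t')` and
`ld(t) ~^d ld(t')`). -/
def DkRel (d k : ℕ) (t t' : BTree) : Prop :=
  ModListEq k t.ld t'.ld ∧ DepthEq d t.ld t'.ld

/-- `T_n`: full binary trees with `n+1` leaves. -/
def Tn (n : ℕ) : Type := {t : BTree // t.numLeaves = n + 1}

/-- `C^{d,e}_n`: the number of equivalence classes of the relation `DeRel d e` on `T_n`. -/
noncomputable def Cde (d e n : ℕ) : ℕ :=
  Nat.card (Quot (fun t t' : Tn n => DeRel d e t.1 t'.1))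

/-- `C^d_{k,n}`: the number of equivalence classes of `ld(t) ~_k^d ld(t')` on `T_n`. -/
noncomputable def Cdk (d k n : ℕ) : ℕ :=
  Nat.card (Quot (fun t t' : Tn n => DkRel d k t.1 t'.1))

/-!
For `d, e ≤ 1` every two trees with the same number of leaves are equivalent: the only left depth
equal to `0` is that of the last leaf, and the only right depth equal to `0` is that of the first
one. If `2 ≤ d`, then in `ld (node l r)` the first entry equal to `1` is that of the last leaf of
`l`, so the equivalence class of `node l r` determines the number of leaves of `l`; the case `2 ≤ e`
is the mirror image. The class of `node l r` is then the product of the class of `l` for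
`(d - 1, e)` and the class of `r` for `(d, e - 1)`, and by recursion every class is a product of
sets of all trees with a given number of leaves, which Catalan numbers count.
-/

section DepthEq

variable {d : ℕ} {b b' c c' : List ℕ}

lemma depthEq_iff_map_min_eq : DepthEq d b c ↔ b.map (min d) = c.map (min d) := by
  rw [← List.forall₂_eq_eq_eq, List.forall₂_map_left_iff, List.forall₂_map_right_iff, DepthEq]
  have hmin : ∀ x y : ℕ, (min x y < d → x = y) ↔ min d x = min d y := by omega
  simp only [hmin]

lemma DepthEq.refl (d : ℕ) (b : List ℕ) : DepthEq d b b :=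
  depthEq_iff_map_min_eq.2 rfl

lemma DepthEq.length_eq (h : DepthEq d b c) : b.length = c.length :=
  List.Forall₂.length_eq h

lemma depthEq_append_iff (hlen : b.length = b'.length) :
    DepthEq d (b ++ c) (b' ++ c') ↔ DepthEq d b b' ∧ DepthEq d c c' := by
  simp only [depthEq_iff_map_min_eq, List.map_append]
  exact List.append_eq_append_iff_of_size_eq_left (by simpa using hlen)

lemma depthEq_reverse_iff : DepthEq d b.reverse c.reverse ↔ DepthEq d b c :=
  List.forall₂_reverse_iff

-- The truncation `0 - 1 = 0` is harmless: `DepthEq 0` only compares lengths.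
lemma depthEq_map_add_one_iff :
    DepthEq d (b.map (· + 1)) (c.map (· + 1)) ↔ DepthEq (d - 1) b c := by
  have hshift : ∀ x y : ℕ, (min (x + 1) (y + 1) < d → x + 1 = y + 1) ↔
      (min x y < d - 1 → x = y) := by omega
  simp only [DepthEq, List.forall₂_map_left_iff, List.forall₂_map_right_iff, hshift]

lemma depthEq_of_forall_le (hlen : b.length = c.length) (hb : ∀ x ∈ b, d ≤ x)
    (hc : ∀ x ∈ c, d ≤ x) : DepthEq d b c := by
  have map_min {l : List ℕ} (hl : ∀ x ∈ l, d ≤ x) : l.map (min d) = List.replicate l.length d :=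
    List.map_eq_replicate_iff.2 fun x hx => min_eq_left (hl x hx)
  rw [depthEq_iff_map_min_eq, map_min hb, map_min hc, hlen]

lemma DepthEq.length_eq_of_append_cons {k : ℕ} (hk : k < d) (hb : k ∉ b) (hb' : k ∉ b')
    (h : DepthEq d (b ++ k :: c) (b' ++ k :: c')) : b.length = b'.length := by
  have idxOf_map {l m : List ℕ} (hl : k ∉ l) :
      ((l ++ k :: m).map (min d)).idxOf (min d k) = l.length := by
    have hl_map : min d k ∉ l.map (min d) := by
      intro hmem
      obtain ⟨x, hx, hxk⟩ := List.mem_map.1 hmem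
      obtain rfl : x = k := by omega
      exact hl hx
    rw [List.map_append, List.idxOf_append_of_notMem hl_map, List.map_cons, List.idxOf_cons_self,
      List.length_map, add_zero]
  rw [← idxOf_map hb, depthEq_iff_map_min_eq.1 h, idxOf_map hb']

end DepthEq

namespace BTree

lemma numLeaves_pos : ∀ t : BTree, 0 < t.numLeaves
  | leaf => Nat.one_pos
  | node l _ => Nat.add_pos_left l.numLeaves_pos _

lemma numLeaves_eq_one_iff {t : BTree} : t.numLeaves = 1 ↔ t = leaf := by
  cases t with
  | leaf => simp [numLeaves]
  | node l r =>
    have hl := l.numLeaves_pos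
    have hr := r.numLeaves_pos
    simp only [numLeaves, reduceCtorEq, iff_false]
    omega

lemma ld_node (l r : BTree) : (node l r).ld = l.ld.map (· + 1) ++ r.ld := by
  simp [ld, leafDepths, Function.comp_def]

lemma rd_node (l r : BTree) : (node l r).rd = l.rd ++ r.rd.map (· + 1) := by
  simp [rd, leafDepths, Function.comp_def]

lemma length_ld (t : BTree) : t.ld.length = t.numLeaves := by
  induction t with
  | leaf => rfl
  | node l r ihl ihr => simp [ld_node, numLeaves, ihl, ihr]

lemma length_rd (t : BTree) : t.rd.length = t.numLeaves := by
  induction t with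
  | leaf => rfl
  | node l r ihl ihr => simp [rd_node, numLeaves, ihl, ihr]

lemma exists_ld_eq_append_zero (t : BTree) :
    ∃ b : List ℕ, t.ld = b ++ [0] ∧ ∀ x ∈ b, 1 ≤ x := by
  induction t with
  | leaf => exact ⟨[], rfl, by simp⟩
  | node l r _ ihr =>
    obtain ⟨b, hb, hb_pos⟩ := ihr
    refine ⟨l.ld.map (· + 1) ++ b, by simp [ld_node, hb], fun x hx => ?_⟩
    rcases List.mem_append.1 hx with hx | hx
    · obtain ⟨y, -, rfl⟩ := List.mem_map.1 hx
      exact Nat.le_add_left 1 y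
    · exact hb_pos x hx

/-- The reflection of a tree, which exchanges left and right; it reduces statements about right
depths to statements about left depths. -/
def mirror : BTree → BTree
  | leaf => leaf
  | node l r => node r.mirror l.mirror

lemma numLeaves_mirror (t : BTree) : t.mirror.numLeaves = t.numLeaves := by
  induction t with
  | leaf => rfl
  | node l r ihl ihr => simp only [mirror, numLeaves, ihl, ihr, add_comm]

lemma ld_mirror (t : BTree) : t.mirror.ld = t.rd.reverse := by
  induction t with
  | leaf => rfl
  | node l r ihl ihr =>
    simp only [mirror, ld_node, rd_node, ihl, ihr, List.map_reverse, List.reverse_append]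

lemma depthEq_ld_mirror_iff {e : ℕ} {t t' : BTree} :
    DepthEq e t.mirror.ld t'.mirror.ld ↔ DepthEq e t.rd t'.rd := by
  rw [ld_mirror, ld_mirror, depthEq_reverse_iff]

lemma depthEq_ld_of_le_one {d : ℕ} (hd : d ≤ 1) {t t' : BTree}
    (h : t.numLeaves = t'.numLeaves) : DepthEq d t.ld t'.ld := by
  obtain ⟨b, hb, hb_pos⟩ := t.exists_ld_eq_append_zero
  obtain ⟨b', hb', hb'_pos⟩ := t'.exists_ld_eq_append_zero
  have hlen : b.length = b'.length := by
    simpa [← length_ld, hb, hb'] using h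
  rw [hb, hb', depthEq_append_iff hlen]
  exact ⟨depthEq_of_forall_le hlen (fun x hx => hd.trans (hb_pos x hx))
    fun x hx => hd.trans (hb'_pos x hx), DepthEq.refl d [0]⟩

lemma depthEq_rd_of_le_one {e : ℕ} (he : e ≤ 1) {t t' : BTree}
    (h : t.numLeaves = t'.numLeaves) : DepthEq e t.rd t'.rd :=
  depthEq_ld_mirror_iff.1 (depthEq_ld_of_le_one he (by rwa [numLeaves_mirror, numLeaves_mirror]))

lemma numLeaves_left_eq_of_depthEq_ld {d : ℕ} (hd : 2 ≤ d) {l r l' r' : BTree}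
    (h : DepthEq d (node l r).ld (node l' r').ld) : l.numLeaves = l'.numLeaves := by
  obtain ⟨b, hb, hb_pos⟩ := l.exists_ld_eq_append_zero
  obtain ⟨b', hb', hb'_pos⟩ := l'.exists_ld_eq_append_zero
  have one_notMem {a : List ℕ} (ha : ∀ x ∈ a, 1 ≤ x) : 1 ∉ a.map (· + 1) := by
    simpa using fun h0 => absurd (ha 0 h0) (by decide)
  have hlen : (b.map (· + 1)).length = (b'.map (· + 1)).length :=
    DepthEq.length_eq_of_append_cons hd (one_notMem hb_pos) (one_notMem hb'_pos)
      (by simpa [ld_node, hb, hb'] using h)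
  simpa [← length_ld, hb, hb'] using hlen

lemma numLeaves_right_eq_of_depthEq_rd {e : ℕ} (he : 2 ≤ e) {l r l' r' : BTree}
    (h : DepthEq e (node l r).rd (node l' r').rd) : r.numLeaves = r'.numLeaves := by
  simpa only [numLeaves_mirror] using
    numLeaves_left_eq_of_depthEq_ld he (depthEq_ld_mirror_iff.2 h)

end BTree

section DeRel

open BTree

variable {d e : ℕ}

lemma DeRel.refl (d e : ℕ) (t : BTree) : DeRel d e t t :=
  ⟨DepthEq.refl d t.ld, DepthEq.refl e t.rd⟩

lemma DeRel.numLeaves_eq {t t' : BTree} (h : DeRel d e t t') : t.numLeaves = t'.numLeaves := by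
  simpa only [length_ld] using h.1.length_eq

lemma deRel_iff_numLeaves_eq (hd : d ≤ 1) (he : e ≤ 1) {t t' : BTree} :
    DeRel d e t t' ↔ t.numLeaves = t'.numLeaves :=
  ⟨DeRel.numLeaves_eq, fun h => ⟨depthEq_ld_of_le_one hd h, depthEq_rd_of_le_one he h⟩⟩

variable {l r l' r' : BTree}

lemma DeRel.numLeaves_left_eq (hde : 2 ≤ d ∨ 2 ≤ e) (h : DeRel d e (node l r) (node l' r')) :
    l.numLeaves = l'.numLeaves := by
  rcases hde with hd | he
  · exact numLeaves_left_eq_of_depthEq_ld hd h.1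
  · have hr : r.numLeaves = r'.numLeaves := numLeaves_right_eq_of_depthEq_rd he h.2
    have hsum : l.numLeaves + r.numLeaves = l'.numLeaves + r'.numLeaves := h.numLeaves_eq
    omega

lemma deRel_node_iff_of_numLeaves_eq (hl : l.numLeaves = l'.numLeaves) :
    DeRel d e (node l r) (node l' r') ↔ DeRel (d - 1) e l l' ∧ DeRel d (e - 1) r r' := by
  have hld : (l.ld.map (· + 1)).length = (l'.ld.map (· + 1)).length := by
    simpa [length_ld] using hl
  have hrd : l.rd.length = l'.rd.length := by simpa only [length_rd] using hl
  simp only [DeRel, ld_node, rd_node, depthEq_append_iff hld, depthEq_append_iff hrd,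
    depthEq_map_add_one_iff]
  exact and_and_and_comm

lemma deRel_node_iff (hde : 2 ≤ d ∨ 2 ≤ e) :
    DeRel d e (node l r) (node l' r') ↔ DeRel (d - 1) e l l' ∧ DeRel d (e - 1) r r' :=
  ⟨fun h => (deRel_node_iff_of_numLeaves_eq (h.numLeaves_left_eq hde)).1 h,
    fun h => (deRel_node_iff_of_numLeaves_eq h.1.numLeaves_eq).2 h⟩

end DeRel

namespace BTree

/-- The underlying map of `equivBinaryTree`; leaves become `nil`s. -/
def toBinaryTree : BTree → BinaryTree Unit
  | leaf => .nil
  | node l r => .node () l.toBinaryTree r.toBinaryTree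

/-- The inverse map of `equivBinaryTree`; `nil`s become leaves. -/
def ofBinaryTree : BinaryTree Unit → BTree
  | .nil => leaf
  | .node _ l r => node (ofBinaryTree l) (ofBinaryTree r)

/-- The identification of full binary trees with `BinaryTree Unit`, for which the count by Catalan
numbers is known. -/
def equivBinaryTree : BTree ≃ BinaryTree Unit where
  toFun := toBinaryTree
  invFun := ofBinaryTree
  left_inv t := by
    induction t with
    | leaf => rfl
    | node l r ihl ihr => exact congrArg₂ node ihl ihr
  right_inv t := by
    induction t with
    | nil => rfl
    | node _ l r ihl ihr => exact congrArg₂ (BinaryTree.node ()) ihl ihr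

lemma numLeaves_equivBinaryTree (t : BTree) : (equivBinaryTree t).numLeaves = t.numLeaves := by
  induction t with
  | leaf => rfl
  | node l r ihl ihr => exact congrArg₂ (· + ·) ihl ihr

lemma ncard_setOf_numLeaves_eq (n : ℕ) : {t : BTree | t.numLeaves = n + 1}.ncard = catalan n := by
  have hpre : {t : BTree | t.numLeaves = n + 1} =
      equivBinaryTree ⁻¹' (BinaryTree.treesOfNumNodesEq n : Set (BinaryTree Unit)) := by
    ext t
    simp [← numLeaves_equivBinaryTree, BinaryTree.numLeaves_eq_numNodes_succ]
  rw [hpre, Set.ncard_preimage_of_injective_subset_range equivBinaryTree.injective (by simp),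
    Set.ncard_coe_finset, BinaryTree.treesOfNumNodesEq_card_eq_catalan]

/-- The equivalence class of `t` under `DeRel d e`. The number of leaves is not prescribed
separately, since equivalent trees have equally many leaves. -/
def deRelClass (d e : ℕ) (t : BTree) : Set BTree := {t' | DeRel d e t t'}

lemma deRelClass_leaf (d e : ℕ) : deRelClass d e leaf = {leaf} := by
  ext t
  constructor
  · exact fun h => numLeaves_eq_one_iff.1 (DeRel.numLeaves_eq h).symm
  · rintro rfl
    exact DeRel.refl d e leaf

lemma deRelClass_node {d e : ℕ} (hde : 2 ≤ d ∨ 2 ≤ e) (l r : BTree) :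
    deRelClass d e (node l r) =
      Set.image2 node (deRelClass (d - 1) e l) (deRelClass d (e - 1) r) := by
  ext t
  constructor
  · intro h
    cases t with
    | leaf => exact absurd (numLeaves_eq_one_iff.1 (DeRel.numLeaves_eq h)) (by simp)
    | node l' r' =>
      obtain ⟨hl, hr⟩ := (deRel_node_iff hde).1 h
      exact Set.mem_image2_of_mem hl hr
  · rintro ⟨l', hl, r', hr, rfl⟩
    exact (deRel_node_iff hde).2 ⟨hl, hr⟩

lemma ncard_image2_node (s t : Set BTree) : (Set.image2 node s t).ncard = s.ncard * t.ncard := by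
  have hinj : Function.Injective (Function.uncurry node) := by
    rintro ⟨l, r⟩ ⟨l', r'⟩ h
    simpa using h
  rw [← Set.image_uncurry_prod, Set.ncard_image_of_injective _ hinj, Set.ncard_prod]

lemma ncard_deRelClass_of_le_one {d e : ℕ} (hd : d ≤ 1) (he : e ≤ 1) (t : BTree) :
    (deRelClass d e t).ncard = catalan (t.numLeaves - 1) := by
  rw [← ncard_setOf_numLeaves_eq, Nat.sub_add_cancel t.numLeaves_pos]
  congr 1
  ext t'
  exact (deRel_iff_numLeaves_eq hd he).trans eq_comm

/-- The composition `m₀ + ⋯ + m_r` of the number of leaves of `t` for which the class of `t` under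
`DeRel d e` has `C_{m₀ - 1} ⋯ C_{m_r - 1}` elements. Removing the root lowers `d` on the left and
`e` on the right, and the recursion stops at a subtree as soon as `d, e ≤ 1`. -/
def catalanParts (d e : ℕ) : BTree → List ℕ
  | leaf => [1]
  | node l r =>
      if 2 ≤ d ∨ 2 ≤ e then catalanParts (d - 1) e l ++ catalanParts d (e - 1) r
      else [(node l r).numLeaves]

lemma catalanParts_ne_nil (d e : ℕ) (t : BTree) : catalanParts d e t ≠ [] := by
  fun_induction catalanParts d e t <;> simp_all

lemma pos_of_mem_catalanParts {d e m : ℕ} {t : BTree} (hm : m ∈ catalanParts d e t) : 0 < m := by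
  fun_induction catalanParts d e t with
  | case1 => simp_all
  | case2 _ _ _ _ _ ihl ihr => exact (List.mem_append.1 hm).elim ihl ihr
  | case3 => exact List.mem_singleton.1 hm ▸ numLeaves_pos _

lemma sum_catalanParts (d e : ℕ) (t : BTree) : (catalanParts d e t).sum = t.numLeaves := by
  fun_induction catalanParts d e t <;> simp_all [numLeaves]

theorem ncard_deRelClass (d e : ℕ) (t : BTree) :
    (deRelClass d e t).ncard = ((catalanParts d e t).map fun m => catalan (m - 1)).prod := by
  fun_induction catalanParts d e t with
  | case1 d e => simp [deRelClass_leaf]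
  | case2 d e l r hde ihl ihr =>
    rw [deRelClass_node hde, ncard_image2_node, ihl, ihr, List.map_append, List.prod_append]
  | case3 d e l r hde =>
    simpa using ncard_deRelClass_of_le_one (by omega) (by omega) (node l r)

end BTree

/-- for `d,e ≥ 1`, the cardinality of every equivalence class of the relation
`t ~ t'` iff `ld(t) ~^d ld(t')` and `rd(t) ~^e rd(t')` on `T_n` is a product of Catalan
numbers `C_{m₀-1} ⋯ C_{m_r-1}` with `m₀ + ⋯ + m_r = n + 1` (each `m_i ≥ 1`, `r ≥ 0`). -/
theorem stmt1 (d e n : ℕ) (hd : 1 ≤ d) (he : 1 ≤ e) (t : BTree) (ht : t.numLeaves = n + 1) :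
    ∃ L : List ℕ, L ≠ [] ∧ (∀ m ∈ L, 0 < m) ∧ L.sum = n + 1 ∧
      Nat.card {t' : BTree // t'.numLeaves = n + 1 ∧ DeRel d e t t'} =
        (L.map fun m => catalan (m - 1)).prod := by
  refine ⟨BTree.catalanParts d e t, BTree.catalanParts_ne_nil d e t,
    fun _ => BTree.pos_of_mem_catalanParts, (BTree.sum_catalanParts d e t).trans ht, ?_⟩
  have hclass : {t' : BTree | t'.numLeaves = n + 1 ∧ DeRel d e t t'} = BTree.deRelClass d e t :=
    Set.ext fun t' => and_iff_right_of_imp fun h => h.numLeaves_eq.symm.trans ht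
  rw [← BTree.ncard_deRelClass, ← hclass]
  exact Nat.card_coe_set_eq _
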